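/- arXiv:2505.06577 — 8 statements merged into one kernel-verified Lean document; each statement's English description precedes it below -/
import Mathlib

section
/- Let n ≥ 1 and let λ : Fin n → ℂ lie in the Poincaré domain. Then λ admits only finitely many resonances: the set {(s, m) ∈ Fin n × (Fin n → ℕ) : |m| ≥ 2 and λ_s = (m,λ)} is finite. -/
open scoped BigOperators

/-- If `l : Fin n → ℂ` lies in the Poincaré domain (0 is not in the convex
hull of its values), then the set of resonances `(s, m)` with `|m| ≥ 2` and
`l s = (m, l)` is finite. -/
theorem stmt_0 (n : ℕ) (hn : 1 ≤ n) (l : Fin n → ℂ)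
    (hP : (0 : ℂ) ∉ convexHull ℝ (Set.range l)) :
    {p : Fin n × (Fin n → ℕ) |
      2 ≤ ∑ k, p.2 k ∧ l p.1 = ∑ k, (p.2 k : ℂ) * l k}.Finite := by
  obtain ⟨f, u, h0, hu⟩ := geometric_hahn_banach_point_closed (convex_convexHull ℝ (Set.range l))
    ((Set.finite_range l).isClosed_convexHull ℝ) hP
  rw [map_zero] at h0
  have hl : ∀ k, u < f (l k) := fun k => hu _ (subset_convexHull ℝ _ ⟨k, rfl⟩)
  have hpos : ∀ k, 0 ≤ f (l k) := fun k => (h0.trans (hl k)).le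
  refine ((Set.finite_univ (α := Fin n)).prod
    (Set.finite_Iic (fun _ : Fin n => ⌊(∑ j, f (l j)) / u⌋₊))).subset ?_
  rintro ⟨s, m⟩ ⟨-, h⟩
  refine ⟨Set.mem_univ _, fun k => ?_⟩
  apply Nat.le_floor
  rw [le_div_iff₀ h0]
  have h1 : f (l s) = ∑ k, (m k : ℝ) * f (l k) := by
    have h2 : l s = ∑ k, (m k : ℝ) • l k := by
      simpa using h
    rw [h2, map_sum]
    simp only [map_smul, smul_eq_mul]
  calc (m k : ℝ) * u ≤ (m k : ℝ) * f (l k) :=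
        mul_le_mul_of_nonneg_left (hl k).le (Nat.cast_nonneg _)
    _ ≤ ∑ k, (m k : ℝ) * f (l k) :=
        Finset.single_le_sum (f := fun k => (m k : ℝ) * f (l k))
          (fun i _ => mul_nonneg (Nat.cast_nonneg _) (hpos i)) (Finset.mem_univ k)
    _ = f (l s) := h1.symm
    _ ≤ ∑ j, f (l j) :=
        Finset.single_le_sum (f := fun j => f (l j)) (fun i _ => hpos i) (Finset.mem_univ s)
end

section
/- Let n ≥ 1 and let λ : Fin n → ℂ lie in the Poincaré domain. Then there exists C ∈ ℕ such that every resonance relation λ_s = (m,λ), with s ∈ Fin n and m : Fin n → ℕ, satisfies |m| ≤ C. -/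
open scoped BigOperators

/-- In the Poincaré domain, resonances have bounded order: there is `C`
such that every resonance `l s = (m, l)` satisfies `|m| ≤ C`. -/
theorem stmt_1 (n : ℕ) (hn : 1 ≤ n) (l : Fin n → ℂ)
    (hP : (0 : ℂ) ∉ convexHull ℝ (Set.range l)) :
    ∃ C : ℕ, ∀ (s : Fin n) (m : Fin n → ℕ),
      l s = ∑ k, (m k : ℂ) * l k → ∑ k, m k ≤ C := by
  have hc : IsClosed (convexHull ℝ (Set.range l)) :=
    (Set.finite_range l).isCompact_convexHull ℝ |>.isClosed
  obtain ⟨f, u, h0, hu⟩ := geometric_hahn_banach_point_closed (convex_convexHull ℝ _) hc hP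
  rw [map_zero] at h0
  have hl : ∀ k, u < f (l k) := fun k => hu _ (subset_convexHull ℝ _ ⟨k, rfl⟩)
  obtain ⟨C, hC⟩ := exists_nat_ge ((∑ k, f (l k)) / u)
  refine ⟨C, fun s m h => ?_⟩
  have h1 : f (l s) = ∑ k, (m k : ℝ) * f (l k) := by
    rw [h, map_sum]
    refine Finset.sum_congr rfl fun k _ => ?_
    have : (m k : ℂ) * l k = (m k : ℝ) • l k := by simp
    rw [this, map_smul, smul_eq_mul]
  have h2 : (∑ k, (m k : ℝ)) * u ≤ f (l s) := by
    rw [h1, Finset.sum_mul]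
    exact Finset.sum_le_sum fun k _ =>
      mul_le_mul_of_nonneg_left (hl k).le (Nat.cast_nonneg _)
  have h3 : f (l s) ≤ ∑ k, f (l k) :=
    Finset.single_le_sum (f := fun k => f (l k))
      (fun k _ => (h0.trans (hl k)).le) (Finset.mem_univ s)
  have h4 : (∑ k, (m k : ℝ)) ≤ C :=
    ((le_div_iff₀ h0).2 (h2.trans h3)).trans hC
  exact_mod_cast h4
end

section
/- Let n ≥ 1 and let λ : Fin n → ℂ lie in the Poincaré domain. Then the set g_λ of λ-resonant polynomial vector fields on ℂⁿ is a ℂ-linear subspace of the space of polynomial vector fields, and it is finite dimensional over ℂ. -/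
open scoped BigOperators

lemma resonant_finite (n : ℕ) (l : Fin n → ℂ)
    (hP : (0 : ℂ) ∉ convexHull ℝ (Set.range l)) (c : ℂ) :
    {m : Fin n →₀ ℕ | c = ∑ k, (m k : ℂ) * l k}.Finite := by
  obtain ⟨f, u, h0, hu⟩ := geometric_hahn_banach_point_closed (convex_convexHull ℝ (Set.range l))
    ((Set.finite_range l).isCompact_convexHull (𝕜 := ℝ)).isClosed hP
  rw [map_zero] at h0
  have hl : ∀ k, u < f (l k) := fun k => hu _ (subset_convexHull ℝ _ ⟨k, rfl⟩)
  refine (Set.finite_Iic (Finsupp.equivFunOnFinite.symm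
    (fun _ : Fin n => ⌊f c / u⌋₊))).subset ?_
  intro m hm k
  have hm' : c = ∑ k, (m k : ℂ) * l k := hm
  have h1 : f c = ∑ k, (m k : ℝ) * f (l k) := by
    rw [hm', map_sum]
    refine Finset.sum_congr rfl fun i _ => ?_
    have : (m i : ℂ) * l i = (m i : ℝ) • l i := by simp
    rw [this, map_smul, smul_eq_mul]
  have h2 : (m k : ℝ) * f (l k) ≤ f c := by
    rw [h1]
    exact Finset.single_le_sum (f := fun k => (m k : ℝ) * f (l k))
      (fun i _ => mul_nonneg (Nat.cast_nonneg _) (h0.trans (hl i)).le) (Finset.mem_univ k)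
  have h3 : (m k : ℝ) * u ≤ f c :=
    (mul_le_mul_of_nonneg_left (hl k).le (Nat.cast_nonneg _)).trans h2
  exact Nat.le_floor ((le_div_iff₀ h0).2 h3)

/-- In the Poincaré domain, the λ-resonant polynomial vector fields form a
finite dimensional ℂ-linear subspace of the space of polynomial vector fields. -/
theorem stmt_8 (n : ℕ) (hn : 1 ≤ n) (l : Fin n → ℂ)
    (hP : (0 : ℂ) ∉ convexHull ℝ (Set.range l)) :
    ∃ V : Submodule ℂ (Fin n → MvPolynomial (Fin n) ℂ),
      (∀ X, X ∈ V ↔ ∀ j, ∀ m ∈ (X j).support, l j = ∑ k, (m k : ℂ) * l k) ∧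
      FiniteDimensional ℂ V := by
  let W : Fin n → Submodule ℂ (MvPolynomial (Fin n) ℂ) := fun j =>
    MvPolynomial.restrictSupport ℂ {m : Fin n →₀ ℕ | l j = ∑ k, (m k : ℂ) * l k}
  refine ⟨Submodule.pi Set.univ W, ?_, ?_⟩
  · intro X
    simp only [Submodule.mem_pi, Set.mem_univ, true_implies, W,
      MvPolynomial.mem_restrictSupport_iff]
    rfl
  · have hW : ∀ j, Module.Finite ℂ (W j) := fun j => by
      have := (resonant_finite n l hP (l j)).to_subtype
      exact Module.Finite.of_basis (MvPolynomial.basisRestrictSupport ℂ _)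
    let g : Submodule.pi Set.univ W →ₗ[ℂ] (∀ j, W j) := LinearMap.pi fun j =>
      ((LinearMap.proj j).comp (Submodule.pi Set.univ W).subtype).codRestrict (W j)
        (fun x => x.2 j (Set.mem_univ j))
    refine Module.Finite.of_injective g ?_
    intro x y h
    ext1
    funext j
    exact congrArg Subtype.val (congrFun h j)
end

section
/- Let n ≥ 1 and λ : Fin n → ℂ. If X is a λ-resonant polynomial vector field on ℂⁿ and Y is a polynomial vector field having only non-λ-resonant monomials (for every j and every exponent m in the support of Y_j one has λ_j ≠ (m,λ)), then the Lie bracket [X,Y] has only non-λ-resonant monomials: for every j and every exponent m in the support of [X,Y]_j one has λ_j ≠ (m,λ). -/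
open scoped BigOperators

lemma aux_term (n : ℕ) (l : Fin n → ℂ) (k j : Fin n) (P Q : MvPolynomial (Fin n) ℂ)
    (h : ∀ a ∈ P.support, ∀ c ∈ Q.support, l k = ∑ i, (a i : ℂ) * l i →
      l j = ∑ i, (c i : ℂ) * l i → False)
    (h' : (∀ a ∈ P.support, l k = ∑ i, (a i : ℂ) * l i) ∨
      (∀ a ∈ Q.support, l j = ∑ i, (a i : ℂ) * l i))
    (m : Fin n →₀ ℕ) (hm : l j = ∑ i, (m i : ℂ) * l i) :
    MvPolynomial.coeff m (P * MvPolynomial.pderiv k Q) = 0 := by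
  classical
  rw [MvPolynomial.coeff_mul]
  refine Finset.sum_eq_zero ?_
  rintro ⟨a, b⟩ hab
  rw [Finset.HasAntidiagonal.mem_antidiagonal] at hab
  simp only at hab ⊢
  rw [MvPolynomial.coeff_pderiv]
  by_cases ha : a ∈ P.support
  swap
  · rw [MvPolynomial.notMem_support_iff.mp ha, zero_mul]
  by_cases hb : b + Finsupp.single k 1 ∈ Q.support
  swap
  · rw [MvPolynomial.notMem_support_iff.mp hb, zero_mul, mul_zero]
  exfalso
  have e1 : ∑ i, (m i : ℂ) * l i = ∑ i, (a i : ℂ) * l i + ∑ i, (b i : ℂ) * l i := by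
    rw [← hab, ← Finset.sum_add_distrib]
    exact Finset.sum_congr rfl fun i _ => by rw [Finsupp.add_apply]; push_cast; ring
  have e2 : ∑ i, (((b + Finsupp.single k 1 : Fin n →₀ ℕ) i : ℕ) : ℂ) * l i = ∑ i, (b i : ℂ) * l i + l k := by
    simp [add_mul, Finset.sum_add_distrib, Finsupp.single_apply]
  rcases h' with h' | h'
  · have := h' a ha
    exact h a ha _ hb this (by rw [e2, hm, e1, this]; ring)
  · have := h' _ hb
    refine h a ha _ hb ?_ this
    rw [e2, hm, e1] at this
    linear_combination -this


/-- The Lie bracket of a λ-resonant polynomial vector field with a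
polynomial vector field all of whose monomials are non-λ-resonant has only
non-λ-resonant monomials. -/
theorem stmt_10 (n : ℕ) (hn : 1 ≤ n) (l : Fin n → ℂ)
    (X Y : Fin n → MvPolynomial (Fin n) ℂ)
    (hX : ∀ j, ∀ m ∈ (X j).support, l j = ∑ k, (m k : ℂ) * l k)
    (hY : ∀ j, ∀ m ∈ (Y j).support, l j ≠ ∑ k, (m k : ℂ) * l k) :
    ∀ j, ∀ m ∈ (∑ k, (X k * MvPolynomial.pderiv k (Y j)
        - Y k * MvPolynomial.pderiv k (X j))).support,
      l j ≠ ∑ k, (m k : ℂ) * l k := by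
  intro j m hmem hm
  refine (MvPolynomial.mem_support_iff.mp hmem) ?_
  rw [MvPolynomial.coeff_sum]
  refine Finset.sum_eq_zero fun k _ => ?_
  rw [MvPolynomial.coeff_sub,
    aux_term n l k j (X k) (Y j) (fun a _ c hc _ h => hY j c hc h) (Or.inl (hX k)) m hm,
    aux_term n l k j (Y k) (X j) (fun a ha c _ h _ => hY k a ha h) (Or.inr (hX j)) m hm,
    sub_zero]
end

section
/- Let n ≥ 1, let λ : Fin n → ℂ lie in the Poincaré domain, and let ξ be in Poincaré–Dulac normal form for λ. Suppose a ∈ ℂ and X : (Fin n → ℂ) → (Fin n → ℂ) is entire, and that a·ξ(z) = DX(z)(ξ(z)) − Dξ(z)(X(z)) for every z ∈ ℂⁿ (i.e., a·ξ = [ξ,X] = L_ξ(X)). Then a = 0. In other words, the line ℂ·ξ meets the image of the Lie derivative L_ξ on entire vector fields only in 0. -/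
open scoped BigOperators

open Filter Topology in
theorem aux_cont_fderiv {n : ℕ} {f : (Fin n → ℂ) → (Fin n → ℂ)} (hf : Differentiable ℂ f) :
    Continuous (fderiv ℂ f) := by
  rw [continuous_clm_apply]
  intro w
  rw [continuous_iff_continuousAt]
  intro z0
  let F : C((Fin n → ℂ) × ℂ, Fin n → ℂ) :=
    ⟨fun p => f (p.1 + p.2 • w), hf.continuous.comp (by fun_prop)⟩
  have h1 : Tendsto (fun z => F.curry z) (𝓝 z0) (𝓝 (F.curry z0)) := F.curry.continuous.tendsto z0
  rw [ContinuousMap.tendsto_iff_tendstoLocallyUniformly] at h1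
  have hline : ∀ z, Differentiable ℂ (fun t : ℂ => f (z + t • w)) := fun z =>
    hf.comp (by fun_prop)
  have h2 := (h1.tendstoLocallyUniformlyOn (s := Set.univ)).deriv
    (Eventually.of_forall fun z => (hline z).differentiableOn) isOpen_univ
  have h3 := h2.tendsto_at (Set.mem_univ (0 : ℂ))
  have h4 : ∀ z, deriv (fun t : ℂ => f (z + t • w)) 0 = fderiv ℂ f z w := by
    intro z
    have := (hf z).lineDeriv_eq_fderiv (v := w)
    rw [← this]; rfl
  have h5 : Tendsto (fun z => deriv (fun t : ℂ => f (z + t • w)) 0) (𝓝 z0)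
    (𝓝 (deriv (fun t : ℂ => f (z0 + t • w)) 0)) := h3
  simp only [h4] at h5
  exact h5

open Filter Topology in
theorem aux_deriv {n : ℕ} {f g : (Fin n → ℂ) → (Fin n → ℂ)} (hf : Differentiable ℂ f)
    (hg : Differentiable ℂ g) (h0 : g 0 = 0) (v : Fin n → ℂ) :
    HasDerivAt (fun t : ℂ => fderiv ℂ f (t • v) (g (t • v)))
      (fderiv ℂ f 0 (fderiv ℂ g 0 v)) 0 := by
  have hgl : HasDerivAt (fun t : ℂ => g (t • v)) (fderiv ℂ g 0 v) 0 := by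
    have := (hg 0).hasFDerivAt.hasLineDerivAt v
    simpa [HasLineDerivAt] using this
  rw [hasDerivAt_iff_tendsto_slope] at hgl ⊢
  have hc : Tendsto (fun t : ℂ => fderiv ℂ f (t • v)) (𝓝[≠] 0) (𝓝 (fderiv ℂ f 0)) := by
    have : Continuous (fun t : ℂ => fderiv ℂ f (t • v)) :=
      (aux_cont_fderiv hf).comp (by fun_prop)
    have h := this.tendsto 0
    simp only [zero_smul] at h
    exact h.mono_left nhdsWithin_le_nhds
  have happ : Continuous (fun p : ((Fin n → ℂ) →L[ℂ] (Fin n → ℂ)) × (Fin n → ℂ) => p.1 p.2) :=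
    isBoundedBilinearMap_apply.continuous
  refine ((happ.tendsto (fderiv ℂ f 0, fderiv ℂ g 0 v)).comp (hc.prodMk_nhds hgl)).congr ?_
  intro t
  simp [slope, h0]

/-- If `ξ` is in Poincaré–Dulac normal form for `λ` in the Poincaré domain,
`X` is an entire vector field and `a • ξ = [ξ, X]`, then `a = 0`. -/
theorem stmt_11 (n : ℕ) (hn : 1 ≤ n) (l : Fin n → ℂ)
    (hP : (0 : ℂ) ∉ convexHull ℝ (Set.range l))
    (R : Finset (Fin n × (Fin n → ℕ))) (a : Fin n × (Fin n → ℕ) → ℂ)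
    (hR : ∀ p ∈ R, 1 ≤ (p.1 : ℕ) ∧ l p.1 = ∑ k, (p.2 k : ℂ) * l k ∧
      (∀ k, p.1 ≤ k → p.2 k = 0) ∧
      (2 ≤ ∑ k, p.2 k ∨ ∃ i : Fin n, (i : ℕ) + 1 = (p.1 : ℕ) ∧
        p.2 = fun k => if k = i then 1 else 0))
    (ξ : (Fin n → ℂ) → (Fin n → ℂ))
    (hξ : ∀ z j, ξ z j = l j * z j +
      ∑ p ∈ R.filter (fun p => p.1 = j), a p * ∏ k, z k ^ p.2 k)
    (a0 : ℂ) (X : (Fin n → ℂ) → (Fin n → ℂ)) (hX : Differentiable ℂ X)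
    (hcomm : ∀ z, a0 • ξ z = fderiv ℂ X z (ξ z) - fderiv ℂ ξ z (X z)) :
    a0 = 0 := by
  have hcm : ∀ p ∈ R, ∃ k, k < p.1 ∧ p.2 k ≠ 0 := by
    intro p hp
    obtain ⟨_, _, h3, h4⟩ := hR p hp
    have : ∃ k, p.2 k ≠ 0 := by
      rcases h4 with h4 | ⟨i, hi, h4⟩
      · by_contra! hc
        simp [hc] at h4
      · exact ⟨i, by simp [h4]⟩
    obtain ⟨k, hk⟩ := this
    refine ⟨k, ?_, hk⟩
    by_contra hlt
    exact hk (h3 k (not_lt.mp hlt))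
  have hξtri : ∀ (w : Fin n → ℂ) (j : Fin n), (∀ k < j, w k = 0) → ξ w j = l j * w j := by
    intro w j hw
    rw [hξ, Finset.sum_eq_zero, add_zero]
    intro p hp
    rw [Finset.mem_filter] at hp
    obtain ⟨k, hk, hk'⟩ := hcm p hp.1
    rw [Finset.prod_eq_zero (Finset.mem_univ k), mul_zero]
    rw [hw k (hp.2 ▸ hk), zero_pow hk']
  have hξ0 : ξ 0 = 0 := by
    ext j
    simp [hξtri 0 j (by simp)]
  have hξd : Differentiable ℂ ξ := by
    have : ξ = fun z j => l j * z j +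
      ∑ p ∈ R.filter (fun p => p.1 = j), a p * ∏ k, z k ^ p.2 k := by
      ext z j; exact hξ z j
    rw [this, differentiable_pi]
    intro j
    fun_prop
  have hl : ∀ j, l j ≠ 0 := by
    intro j hj
    exact hP (hj ▸ subset_convexHull ℝ _ (Set.mem_range_self j))
  have hsum : ∑ j, l j ≠ 0 := by
    intro hs
    apply hP
    have hn' : (n : ℝ) ≠ 0 := by positivity
    have := (convex_convexHull ℝ (Set.range l)).sum_mem (t := Finset.univ)
      (w := fun _ : Fin n => (n : ℝ)⁻¹) (z := l) (by intros; positivity)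
      (by simp [hn']) (fun i _ => subset_convexHull ℝ _ (Set.mem_range_self i))
    rwa [← Finset.smul_sum, hs, smul_zero] at this
  have hline : ∀ {f : (Fin n → ℂ) → (Fin n → ℂ)}, Differentiable ℂ f → ∀ v,
      HasDerivAt (fun t : ℂ => f (t • v)) (fderiv ℂ f 0 v) 0 := by
    intro f hf v
    have := (hf 0).hasFDerivAt.hasLineDerivAt v
    simpa [HasLineDerivAt] using this
  have hA : ∀ (w : Fin n → ℂ) (j : Fin n), (∀ k < j, w k = 0) →
      fderiv ℂ ξ 0 w j = l j * w j := by
    intro w j hw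
    have h1 := (hasDerivAt_pi.mp (hline hξd w)) j
    have h2 : (fun t : ℂ => ξ (t • w) j) = fun t => t * (l j * w j) := by
      ext t
      rw [hξtri _ j (by intro k hk; simp [hw k hk])]
      simp; ring
    rw [h2] at h1
    have h3 : HasDerivAt (fun t : ℂ => t * (l j * w j)) (1 * (l j * w j)) 0 :=
      (hasDerivAt_id (0:ℂ)).mul_const _
    simpa using h1.unique h3
  have hX0 : X 0 = 0 := by
    have h := hcomm 0
    simp only [hξ0, smul_zero, map_zero, zero_sub] at h
    have h' : fderiv ℂ ξ 0 (X 0) = 0 := by simpa using h.symm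
    ext j
    induction j using WellFoundedLT.induction with
    | ind j ih =>
      have := hA (X 0) j ih
      rw [h'] at this
      simpa [hl j] using this.symm
  have hcom : a0 • (fderiv ℂ ξ 0).toLinearMap =
      (fderiv ℂ X 0).toLinearMap * (fderiv ℂ ξ 0).toLinearMap
        - (fderiv ℂ ξ 0).toLinearMap * (fderiv ℂ X 0).toLinearMap := by
    refine LinearMap.ext fun v => ?_
    have h1 := (hline hξd v).const_smul a0
    have h2 := (aux_deriv hX hξd hξ0 v).sub (aux_deriv hξd hX hX0 v)
    have h3 : (a0 • fun t : ℂ => ξ (t • v)) =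
      ((fun t : ℂ => fderiv ℂ X (t • v) (ξ (t • v))) -
        fun t : ℂ => fderiv ℂ ξ (t • v) (X (t • v))) := by
      funext t
      exact hcomm (t • v)
    rw [h3] at h1
    exact h1.unique h2
  have htr := congrArg (LinearMap.trace ℂ (Fin n → ℂ)) hcom
  rw [map_sub, LinearMap.trace_mul_comm, sub_self, map_smul] at htr
  have htA : LinearMap.trace ℂ (Fin n → ℂ) (fderiv ℂ ξ 0).toLinearMap = ∑ j, l j := by
    rw [LinearMap.trace_eq_matrix_trace ℂ (Pi.basisFun ℂ (Fin n)), Matrix.trace]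
    refine Finset.sum_congr rfl fun j _ => ?_
    simp only [Matrix.diag_apply, LinearMap.toMatrix_apply, Pi.basisFun_apply, Pi.basisFun_repr]
    have := hA (Pi.single j 1) j (fun k hk => by simp [hk.ne])
    simpa using this
  rw [htA, smul_eq_mul] at htr
  exact (mul_eq_zero.mp htr).resolve_right hsum
end

section
/- Let n ≥ 1 and let λ : Fin n → ℂ lie in the Poincaré domain. If f : (Fin n → ℂ) → ℂ is entire and satisfies Df(z)(λ·z) = 0 for every z ∈ ℂⁿ, where λ·z denotes the vector (λ_1 z_1, …, λ_n z_n), then f is constant. (The kernel of the Lie derivative L_{ξ₀} along the diagonal vector field ξ₀ = ∑_j λ_j z_j ∂/∂z_j on entire functions consists exactly of the constants.) -/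
open scoped BigOperators

/-- If `λ` is in the Poincaré domain and `f` is entire with
`Df(z)(λ·z) = 0` for all `z`, then `f` is constant. -/
theorem stmt_15 (n : ℕ) (hn : 1 ≤ n) (l : Fin n → ℂ)
    (hP : (0 : ℂ) ∉ convexHull ℝ (Set.range l))
    (f : (Fin n → ℂ) → ℂ) (hf : Differentiable ℂ f)
    (hker : ∀ z : Fin n → ℂ, fderiv ℂ f z (fun j => l j * z j) = 0) :
    ∃ c : ℂ, ∀ z, f z = c := by
  have hcl : IsClosed (convexHull ℝ (Set.range l)) :=
    (Set.finite_range l).isClosed_convexHull ℝ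
  obtain ⟨F, u, h0, hu⟩ := RCLike.geometric_hahn_banach_point_closed (𝕜 := ℂ)
    (convex_convexHull ℝ (Set.range l)) hcl hP
  have hF : ∀ j, 0 < (l j * F 1).re := by
    intro j
    have h1 := hu (l j) (subset_convexHull ℝ _ ⟨j, rfl⟩)
    have h2 : F (l j) = l j * F 1 := by
      have := F.map_smul (l j) 1
      simpa using this
    rw [h2] at h1
    simp only [map_zero] at h0
    exact h0.trans h1
  refine ⟨f 0, fun z => ?_⟩
  let γ : ℂ → Fin n → ℂ := fun t j => Complex.exp (-(l j * F 1) * t) * z j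
  have hγ : ∀ t, HasDerivAt γ ((-F 1) • (fun j => l j * γ t j)) t := by
    intro t
    rw [hasDerivAt_pi]
    intro j
    have h1 : HasDerivAt (fun t : ℂ => -(l j * F 1) * t) (-(l j * F 1)) t := by
      simpa using (hasDerivAt_id t).const_mul (-(l j * F 1))
    have h2 := (h1.cexp).mul_const (z j)
    have h3 : Complex.exp (-(l j * F 1) * t) * -(l j * F 1) * z j
        = ((-F 1) • (fun j => l j * γ t j)) j := by
      simp only [Pi.smul_apply, smul_eq_mul, γ]
      ring
    rw [h3] at h2
    exact h2
  have hg : ∀ t, HasDerivAt (f ∘ γ) 0 t := by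
    intro t
    have h := (hf (γ t)).hasFDerivAt.comp_hasDerivAt t (hγ t)
    rwa [map_smul, hker, smul_zero] at h
  have hconst : ∀ t, f (γ t) = f z := by
    intro t
    have h := is_const_of_deriv_eq_zero (fun t => (hg t).differentiableAt)
      (fun t => (hg t).deriv) t 0
    have hz : γ 0 = z := by
      funext j
      simp [γ]
    simpa [hz] using h
  have hlim : Filter.Tendsto (fun s : ℝ => γ (s : ℂ)) Filter.atTop (nhds 0) := by
    rw [tendsto_pi_nhds]
    intro j
    have h1 : Filter.Tendsto (fun s : ℝ => Complex.exp (-(l j * F 1) * (s : ℂ)))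
        Filter.atTop (nhds 0) := by
      rw [tendsto_zero_iff_norm_tendsto_zero]
      simp only [Complex.norm_exp, Complex.re_mul_ofReal, Complex.neg_re]
      exact Real.tendsto_exp_atBot.comp
        (Filter.tendsto_id.const_mul_atTop_of_neg (neg_lt_zero.mpr (hF j)))
    simpa [γ] using h1.mul_const (z j)
  have h1 : Filter.Tendsto (fun s : ℝ => f (γ (s : ℂ))) Filter.atTop (nhds (f 0)) :=
    (hf.continuous.tendsto 0).comp hlim
  simp only [hconst] at h1
  exact tendsto_nhds_unique tendsto_const_nhds h1
end

section
/- Let n ≥ 1 and let λ : Fin n → ℂ lie in the Poincaré domain. Then for every entire function g : (Fin n → ℂ) → ℂ with g(0) = 0 there exists an entire function f : (Fin n → ℂ) → ℂ such that Df(z)(λ·z) = g(z) for every z ∈ ℂⁿ, where λ·z denotes the vector (λ_1 z_1, …, λ_n z_n). (The Lie derivative L_{ξ₀} along the diagonal vector field ξ₀ = ∑_j λ_j z_j ∂/∂z_j surjects onto the entire functions vanishing at 0.) -/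
open scoped BigOperators
open MeasureTheory Filter Topology

/-- Cauchy estimate: the derivative of an entire function is bounded on balls. -/
lemma aux_fderiv_bound {n : ℕ} (g : (Fin n → ℂ) → ℂ) (hg : Differentiable ℂ g) (R : ℝ) :
    ∃ M : ℝ, 0 ≤ M ∧ ∀ x : Fin n → ℂ, ‖x‖ ≤ R → ‖fderiv ℂ g x‖ ≤ M := by
  obtain ⟨C, hC⟩ := (isCompact_closedBall (0 : Fin n → ℂ) (R + 1)).exists_bound_of_continuousOn
    hg.continuous.continuousOn
  refine ⟨max C 0, le_max_right _ _, fun x hx => ?_⟩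
  refine ContinuousLinearMap.opNorm_le_of_unit_norm (le_max_right _ _) fun v hv => ?_
  have h1 : HasDerivAt (fun s : ℂ => x + s • v) v 0 := by
    simpa using ((hasDerivAt_id (0 : ℂ)).smul_const v).const_add x
  have h0 : x + (0 : ℂ) • v = x := by simp
  have h2 : HasDerivAt (fun s : ℂ => g (x + s • v)) (fderiv ℂ g x v) 0 := by
    have h3 : HasFDerivAt g (fderiv ℂ g x) (x + (0 : ℂ) • v) := by
      rw [h0]
      exact (hg x).hasFDerivAt
    exact h3.comp_hasDerivAt (0 : ℂ) h1
  have h4 : Differentiable ℂ (fun s : ℂ => g (x + s • v)) := hg.comp (by fun_prop)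
  have h5 := Complex.norm_deriv_le_of_forall_mem_sphere_norm_le (c := 0) (R := 1) (C := C)
    one_pos h4.diffContOnCl (fun s hs => by
      refine hC _ ?_
      have hs' : ‖s‖ = 1 := by simpa using hs
      have := norm_add_le x (s • v)
      rw [norm_smul, hs', hv] at this
      rw [mem_closedBall_zero_iff]
      linarith)
  rw [h2.deriv, div_one] at h5
  exact h5.trans (le_max_left _ _)

/-- The flow as a continuous linear map. -/
noncomputable def auxFlow {n : ℕ} (a : Fin n → ℂ) (t : ℝ) : (Fin n → ℂ) →L[ℂ] (Fin n → ℂ) :=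
  ContinuousLinearMap.pi fun j => Complex.exp (-(a j * t)) • ContinuousLinearMap.proj j

lemma auxFlow_apply {n : ℕ} (a : Fin n → ℂ) (t : ℝ) (z : Fin n → ℂ) (j : Fin n) :
    auxFlow a t z j = Complex.exp (-(a j * t)) * z j := by
  simp [auxFlow]

lemma auxFlow_cont {n : ℕ} (a : Fin n → ℂ) : Continuous (auxFlow a) := by
  rw [continuous_clm_apply]
  intro z
  refine continuous_pi fun j => ?_
  simp only [auxFlow_apply]
  fun_prop

lemma auxFlow_norm {n : ℕ} (a : Fin n → ℂ) (d : ℝ) (hd : ∀ j, d ≤ (a j).re) (t : ℝ)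
    (ht : 0 ≤ t) : ‖auxFlow a t‖ ≤ Real.exp (-d * t) := by
  refine ContinuousLinearMap.opNorm_le_bound _ (Real.exp_pos _).le fun z => ?_
  refine (pi_norm_le_iff_of_nonneg (by positivity)).2 fun j => ?_
  rw [auxFlow_apply, norm_mul, Complex.norm_exp]
  gcongr
  · simp
    exact mul_le_mul_of_nonneg_right (hd j) ht
  · exact norm_le_pi_norm z j

lemma auxFlow_deriv {n : ℕ} (a : Fin n → ℂ) (z : Fin n → ℂ) (t : ℝ) :
    HasDerivAt (fun s : ℝ => auxFlow a s z) (-(auxFlow a t (fun j => a j * z j))) t := by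
  rw [hasDerivAt_pi]
  intro j
  simp only [auxFlow_apply, Pi.neg_apply]
  have h1 : HasDerivAt (fun s : ℝ => -(a j * (s : ℂ))) (-(a j * 1)) t :=
    ((Complex.ofRealCLM.hasDerivAt (x := t)).const_mul (a j)).neg
  have := h1.cexp.mul_const (z j)
  refine this.congr_deriv ?_
  ring

lemma aux_direction {n : ℕ} (l : Fin n → ℂ)
    (hP : (0 : ℂ) ∉ convexHull ℝ (Set.range l)) :
    ∃ (c : ℂ) (d : ℝ), 0 < d ∧ ∀ j, d ≤ (c * l j).re := by
  obtain ⟨f, u, h0, h⟩ := RCLike.geometric_hahn_banach_point_closed (𝕜 := ℂ)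
    (convex_convexHull ℝ (Set.range l))
    ((Set.finite_range l).isCompact_convexHull (𝕜 := ℝ)).isClosed hP
  refine ⟨f 1, u, by simpa using h0, fun j => ?_⟩
  have := (h (l j) (subset_convexHull ℝ _ ⟨j, rfl⟩)).le
  have h2 : f (l j) = f 1 * l j := by
    have := f.map_smul (l j) 1
    simp only [smul_eq_mul, mul_one] at this
    rw [this, mul_comm]
  rw [← h2]
  exact this

/-- If `λ` is in the Poincaré domain, then for every entire `g` vanishing
at `0` there is an entire `f` with `Df(z)(λ·z) = g(z)` for every `z`. -/
theorem stmt_16 (n : ℕ) (hn : 1 ≤ n) (l : Fin n → ℂ)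
    (hP : (0 : ℂ) ∉ convexHull ℝ (Set.range l)) :
    ∀ g : (Fin n → ℂ) → ℂ, Differentiable ℂ g → g 0 = 0 →
      ∃ f : (Fin n → ℂ) → ℂ, Differentiable ℂ f ∧
        ∀ z : Fin n → ℂ, fderiv ℂ f z (fun j => l j * z j) = g z := by
  intro g hg hg0
  obtain ⟨c, d, hd, hdl⟩ := aux_direction l hP
  set A := auxFlow (fun j => c * l j) with hA
  have hAn : ∀ t : ℝ, 0 ≤ t → ‖A t‖ ≤ Real.exp (-d * t) := auxFlow_norm _ d hdl
  have hAc : Continuous A := auxFlow_cont _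
  have hAz : ∀ t : ℝ, 0 ≤ t → ∀ z, ‖A t z‖ ≤ Real.exp (-d * t) * ‖z‖ := fun t ht z =>
    (A t).le_of_opNorm_le (hAn t ht) z
  have hAz' : ∀ t : ℝ, 0 ≤ t → ∀ z, ‖A t z‖ ≤ ‖z‖ := fun t ht z => by
    refine (hAz t ht z).trans (mul_le_of_le_one_left (norm_nonneg _) ?_)
    rw [Real.exp_le_one_iff]; nlinarith
  have hAcz : ∀ z, Continuous fun t => A t z := fun z => hAc.clm_apply continuous_const
  have hexp : IntegrableOn (fun t : ℝ => Real.exp (-d * t)) (Set.Ioi 0) :=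
    integrableOn_exp_mul_Ioi (by linarith) 0
  have hAt0 : ∀ z, Tendsto (fun t => A t z) atTop (𝓝 0) := fun z => by
    have h1 : Tendsto (fun t : ℝ => Real.exp (-d * t) * ‖z‖) atTop (𝓝 0) := by
      have : Tendsto (fun t : ℝ => Real.exp (-d * t)) atTop (𝓝 0) :=
        Real.tendsto_exp_atBot.comp (tendsto_id.const_mul_atTop_of_neg (by linarith))
      simpa using this.mul_const ‖z‖
    refine squeeze_zero_norm' ?_ h1
    filter_upwards [eventually_ge_atTop 0] with t ht using hAz t ht z
  let F' : (Fin n → ℂ) → ℝ → ((Fin n → ℂ) →L[ℂ] ℂ) := fun z t => (fderiv ℂ g (A t z)).comp (A t)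
  have hF'm : ∀ z, AEStronglyMeasurable (F' z) (volume.restrict (Set.Ioi 0)) := fun z => by
    have h1 : Measurable fun t => fderiv ℂ g (A t z) :=
      (measurable_fderiv ℂ g).comp (hAcz z).measurable
    have : SecondCountableTopology ((Fin n → ℂ) →L[ℂ] ℂ) := by
      have : ProperSpace ((Fin n → ℂ) →L[ℂ] ℂ) := FiniteDimensional.proper ℂ _
      infer_instance
    exact (ContinuousLinearMap.compL ℂ (Fin n → ℂ) (Fin n → ℂ) ℂ).aestronglyMeasurable_comp₂
      h1.aestronglyMeasurable hAc.aestronglyMeasurable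
  have hF'b : ∀ R : ℝ, ∃ M : ℝ, 0 ≤ M ∧ ∀ z, ‖z‖ ≤ R → ∀ t : ℝ, 0 ≤ t →
      ‖F' z t‖ ≤ M * Real.exp (-d * t) := fun R => by
    obtain ⟨M, hM0, hM⟩ := aux_fderiv_bound g hg R
    refine ⟨M, hM0, fun z hz t ht => ?_⟩
    refine (ContinuousLinearMap.opNorm_comp_le _ _).trans ?_
    exact mul_le_mul (hM _ ((hAz' t ht z).trans hz)) (hAn t ht) (norm_nonneg _) hM0
  have hF'i : ∀ z, IntegrableOn (F' z) (Set.Ioi 0) := fun z => by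
    obtain ⟨M, hM0, hM⟩ := hF'b ‖z‖
    refine Integrable.mono' (hexp.const_mul M) (hF'm z) ?_
    filter_upwards [ae_restrict_mem measurableSet_Ioi] with t ht
    exact hM z le_rfl t (le_of_lt ht)
  have hFc : ∀ z, Continuous fun t => g (A t z) := fun z => hg.continuous.comp (hAcz z)
  have hFi : ∀ z, IntegrableOn (fun t => g (A t z)) (Set.Ioi 0) := fun z => by
    obtain ⟨M, hM0, hM⟩ := aux_fderiv_bound g hg ‖z‖
    refine Integrable.mono' (hexp.const_mul (M * ‖z‖)) (hFc z).aestronglyMeasurable ?_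
    filter_upwards [ae_restrict_mem measurableSet_Ioi] with t ht
    have ht' : (0 : ℝ) ≤ t := le_of_lt ht
    have := (convex_closedBall (0 : Fin n → ℂ) ‖z‖).norm_image_sub_le_of_norm_fderiv_le (𝕜 := ℂ)
      (f := g) (C := M) (x := 0) (y := A t z) (fun x _ => hg x)
      (fun x hx => hM x (by simpa using hx)) (by simp) (by simpa using hAz' t ht' z)
    rw [hg0, sub_zero, sub_zero] at this
    refine this.trans ?_
    have := mul_le_mul_of_nonneg_left (hAz t ht' z) hM0
    linarith
  have key : ∀ z, HasFDerivAt (fun z => ∫ t in Set.Ioi (0 : ℝ), g (A t z))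
      (∫ t in Set.Ioi (0 : ℝ), F' z t) z := fun z => by
    obtain ⟨M, hM0, hM⟩ := hF'b (‖z‖ + 1)
    refine hasFDerivAt_integral_of_dominated_of_fderiv_le (𝕜 := ℂ)
      (F := fun z t => g (A t z)) (F' := F') (bound := fun t => M * Real.exp (-d * t))
      (Metric.ball_mem_nhds z one_pos)
      (Eventually.of_forall fun x => (hFc x).aestronglyMeasurable) (hFi z) (hF'm z) ?_
      (hexp.const_mul M) ?_
    · filter_upwards [ae_restrict_mem measurableSet_Ioi] with t ht x hx
      refine hM x ?_ t (le_of_lt ht)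
      have h1 : ‖x - z‖ < 1 := by simpa [dist_eq_norm] using hx
      have h2 := norm_add_le (x - z) z
      rw [sub_add_cancel] at h2
      linarith
    · refine Eventually.of_forall fun t x _ => ?_
      exact (hg (A t x)).hasFDerivAt.comp x (A t).hasFDerivAt
  refine ⟨fun z => c * ∫ t in Set.Ioi (0 : ℝ), g (A t z),
    fun z => ((key z).const_mul c).differentiableAt, fun z => ?_⟩
  rw [((key z).const_mul c).fderiv]
  have hcv : (fun j => c * l j * z j) = c • (fun j => l j * z j) := by
    ext j; simp [mul_assoc]
  have hder : ∀ t : ℝ, HasDerivAt (fun t => g (A t z)) (-(F' z t (fun j => c * l j * z j))) t :=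
    fun t => by
      have h1 := auxFlow_deriv (fun j => c * l j) z t
      have h2 := ((hg (A t z)).hasFDerivAt.restrictScalars ℝ).comp_hasDerivAt t h1
      refine h2.congr_deriv ?_
      simp [F', hA]
  have hint := integral_Ioi_of_hasDerivAt_of_tendsto' (a := (0 : ℝ)) (m := (0 : ℂ))
    (fun t _ => hder t) ((hF'i z).apply_continuousLinearMap _).neg
    (by simpa [hg0, Function.comp_def] using (hg.continuous.tendsto 0).comp (hAt0 z))
  have hA0 : A 0 z = z := by
    ext j; simp [hA, auxFlow_apply]
  rw [integral_neg, hA0, zero_sub, neg_inj] at hint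
  rw [← hint, ← ContinuousLinearMap.integral_apply (hF'i z), hcv, map_smul]
  simp
end

section
/- Let n ≥ 1, let λ : Fin n → ℂ lie in the Poincaré domain, and let ξ be a polynomial vector field in Poincaré–Dulac normal form for λ. If X is a polynomial vector field on ℂⁿ having only non-λ-resonant monomials (for every j and every exponent m in the support of X_j one has λ_j ≠ (m,λ)) and the Lie bracket [ξ,X] vanishes, then X = 0. (The Lie derivative L_ξ is injective on the non-resonant part g_λ^⊥.) -/
open scoped BigOperators

open MvPolynomial in
/-- Coefficients of a partial derivative. -/
theorem aux_coeff_pderiv {n : ℕ} (k : Fin n) (P : MvPolynomial (Fin n) ℂ) (m : Fin n →₀ ℕ) :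
    coeff m (pderiv k P) = ((m k : ℂ) + 1) * coeff (m + Finsupp.single k 1) P := by
  induction P using MvPolynomial.induction_on' with
  | monomial u c =>
    rw [pderiv_monomial, coeff_monomial, coeff_monomial]
    by_cases h : u = m + Finsupp.single k 1
    · subst h
      simp [mul_comm]
    · rw [if_neg h, mul_zero]
      split_ifs with h2
      · have : u k = 0 := by
          by_contra h3
          apply h
          rw [← h2]
          ext i
          by_cases hi : i = k
          · subst hi
            simp
            omega
          · simp [Finsupp.single_apply, Ne.symm hi]
        simp [this]
      · rfl
  | add p q hp hq => simp [hp, hq, mul_add]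

theorem aux_weights {n : ℕ} (R : Finset (Fin n × (Fin n → ℕ)))
    (hR : ∀ p ∈ R, ∀ k, p.1 ≤ k → p.2 k = 0) :
    ∃ w : Fin n → ℤ, ∀ p ∈ R, ∑ k, (p.2 k : ℤ) * w k < w p.1 := by
  obtain ⟨D, hD⟩ : ∃ D : ℕ, ∀ p ∈ R, ∑ k, p.2 k ≤ D :=
    ⟨R.sup (fun p => ∑ k, p.2 k), fun p hp => Finset.le_sup (f := fun p => ∑ k, p.2 k) hp⟩
  refine ⟨fun k => ((D : ℤ) + 1) ^ (k : ℕ), fun p hp => ?_⟩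
  have hpos : (0 : ℤ) < (D : ℤ) + 1 := by positivity
  -- multiply through by `D + 1`
  have h1 : ∀ k, ((D : ℤ) + 1) * ((p.2 k : ℤ) * ((D : ℤ) + 1) ^ (k : ℕ)) ≤
      (p.2 k : ℤ) * ((D : ℤ) + 1) ^ (p.1 : ℕ) := by
    intro k
    by_cases hk : p.1 ≤ k
    · simp [hR p hp k hk]
    · have hk' : (k : ℕ) + 1 ≤ (p.1 : ℕ) := by
        have := not_le.mp hk
        exact this
      have h2 : ((D : ℤ) + 1) ^ ((k : ℕ) + 1) ≤ ((D : ℤ) + 1) ^ (p.1 : ℕ) :=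
        pow_le_pow_right₀ (by omega) hk'
      calc _ = (p.2 k : ℤ) * ((D : ℤ) + 1) ^ ((k : ℕ) + 1) := by ring
        _ ≤ _ := by gcongr
  have h3 : ((D : ℤ) + 1) * ∑ k, (p.2 k : ℤ) * ((D : ℤ) + 1) ^ (k : ℕ) ≤
      D * ((D : ℤ) + 1) ^ (p.1 : ℕ) := by
    rw [Finset.mul_sum]
    refine (Finset.sum_le_sum fun k _ => h1 k).trans ?_
    rw [← Finset.sum_mul]
    gcongr
    exact_mod_cast hD p hp
  have h4 : (0 : ℤ) < ((D : ℤ) + 1) ^ (p.1 : ℕ) := by positivity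
  refine lt_of_mul_lt_mul_left (a := (D : ℤ) + 1) ?_ hpos.le
  linarith

open MvPolynomial in
theorem aux_prod {n : ℕ} (c : ℂ) (q : Fin n → ℕ) :
    C c * ∏ k, (X k : MvPolynomial (Fin n) ℂ) ^ q k =
      monomial (Finsupp.equivFunOnFinite.symm q) c := by
  rw [monomial_eq, Finsupp.prod_fintype _ _ (by simp)]
  rfl

/-- Let `ξ` be a polynomial vector field in Poincaré–Dulac normal form for
`λ` in the Poincaré domain. If `X` is a polynomial vector field having only
non-λ-resonant monomials and `[ξ, X] = 0`, then `X = 0`. -/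
theorem stmt_17 (n : ℕ) (hn : 1 ≤ n) (l : Fin n → ℂ)
    (hP : (0 : ℂ) ∉ convexHull ℝ (Set.range l))
    (R : Finset (Fin n × (Fin n → ℕ))) (a : Fin n × (Fin n → ℕ) → ℂ)
    (hR : ∀ p ∈ R, 1 ≤ (p.1 : ℕ) ∧ l p.1 = ∑ k, (p.2 k : ℂ) * l k ∧
      (∀ k, p.1 ≤ k → p.2 k = 0) ∧
      (2 ≤ ∑ k, p.2 k ∨ ∃ i : Fin n, (i : ℕ) + 1 = (p.1 : ℕ) ∧
        p.2 = fun k => if k = i then 1 else 0))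
    (ξ : Fin n → MvPolynomial (Fin n) ℂ)
    (hξ : ∀ j, ξ j = MvPolynomial.C (l j) * MvPolynomial.X j +
      ∑ p ∈ R.filter (fun p => p.1 = j),
        MvPolynomial.C (a p) * ∏ k, MvPolynomial.X k ^ p.2 k)
    (X : Fin n → MvPolynomial (Fin n) ℂ)
    (hX : ∀ j, ∀ m ∈ (X j).support, l j ≠ ∑ k, (m k : ℂ) * l k)
    (hbr : ∀ j, (∑ k, (ξ k * MvPolynomial.pderiv k (X j)
        - X k * MvPolynomial.pderiv k (ξ j))) = 0) :
    X = 0 := by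
  classical
  obtain ⟨w, hw⟩ := aux_weights R (fun p hp => (hR p hp).2.2.1)
  by_contra hne
  let T : Finset (Σ _ : Fin n, (Fin n →₀ ℕ)) := Finset.univ.sigma (fun j => (X j).support)
  have hT : T.Nonempty := by
    obtain ⟨j, hj⟩ := Function.ne_iff.mp hne
    obtain ⟨m, hm⟩ := (MvPolynomial.support_nonempty (p := X j)).mpr hj
    exact ⟨⟨j, m⟩, by simpa [T] using hm⟩
  obtain ⟨⟨j, m⟩, hjm, hmax⟩ := T.exists_max_image
    (fun x => ∑ k, (x.2 k : ℤ) * w k - w x.1) hT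
  have hjm' : m ∈ (X j).support := by simpa [T] using hjm
  have hmax' : ∀ i u, ∑ k, (m k : ℤ) * w k - w j < ∑ k, (u k : ℤ) * w k - w i →
      MvPolynomial.coeff u (X i) = 0 := by
    intro i u h
    by_contra h0
    have := hmax ⟨i, u⟩ (by simpa [T] using h0)
    simp only at this
    omega
  have hsingle : ∀ i : Fin n, ∑ k, ((Finsupp.single i 1 : Fin n →₀ ℕ) k : ℤ) * w k = w i := by
    intro i
    simp [Finsupp.single_apply]
  -- first kind of nilpotent terms
  have hN1 : ∀ p ∈ R, MvPolynomial.coeff m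
      (MvPolynomial.C (a p) * (∏ k, MvPolynomial.X k ^ p.2 k) *
        MvPolynomial.pderiv p.1 (X j)) = 0 := by
    intro p hp
    rw [aux_prod, MvPolynomial.coeff_monomial_mul']
    split_ifs with h
    · rw [aux_coeff_pderiv, hmax', mul_zero, mul_zero]
      have e : ∑ k, (m k : ℤ) * w k = ∑ k, (((m - Finsupp.equivFunOnFinite.symm p.2) k : ℕ) : ℤ)
          * w k + ∑ k, (p.2 k : ℤ) * w k := by
        rw [← Finset.sum_add_distrib]
        refine Finset.sum_congr rfl fun k _ => ?_
        rw [← add_mul]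
        congr 1
        have := h k
        simp at this ⊢
        omega
      have e2 := hsingle p.1
      have := hw p hp
      simp only [Finsupp.add_apply, Nat.cast_add, add_mul, Finset.sum_add_distrib]
      linarith
    · rfl
  -- second kind
  have hN2 : ∀ p ∈ R, p.1 = j → ∀ k, MvPolynomial.coeff m
      (X k * MvPolynomial.pderiv k (MvPolynomial.C (a p) * (∏ k, MvPolynomial.X k ^ p.2 k))) = 0 := by
    intro p hp hpj k
    rw [aux_prod, MvPolynomial.pderiv_monomial, MvPolynomial.coeff_mul_monomial']
    split_ifs with h
    · by_cases hk : p.2 k = 0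
      · simp [hk]
      · rw [hmax', zero_mul]
        have e : ∑ i, (m i : ℤ) * w i + w k = ∑ i, (((m - ((Finsupp.equivFunOnFinite.symm p.2 : Fin n →₀ ℕ) -
            Finsupp.single k 1) : Fin n →₀ ℕ) i : ℕ) : ℤ) * w i + ∑ i, (p.2 i : ℤ) * w i := by
          rw [← hsingle k, ← Finset.sum_add_distrib, ← Finset.sum_add_distrib]
          refine Finset.sum_congr rfl fun i _ => ?_
          rw [← add_mul, ← add_mul]
          congr 1
          have := h i
          by_cases hi : k = i
          · subst hi
            simp at this ⊢
            omega
          · simp [Finsupp.single_apply, hi] at this ⊢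
            omega
        have := hw p hp
        rw [hpj] at this
        linarith
    · rfl
  have hA : ∀ k, MvPolynomial.coeff m (ξ k * MvPolynomial.pderiv k (X j)) =
      (m k : ℂ) * l k * MvPolynomial.coeff m (X j) := by
    intro k
    rw [hξ k, add_mul, MvPolynomial.coeff_add, Finset.sum_mul, MvPolynomial.coeff_sum,
      Finset.sum_eq_zero, add_zero, mul_assoc, MvPolynomial.coeff_C_mul,
      MvPolynomial.coeff_X_mul']
    · split_ifs with h
      · have hk : 1 ≤ m k := by
          have := Finsupp.mem_support_iff.mp h
          omega
        rw [aux_coeff_pderiv, tsub_add_cancel_of_le (by simpa using hk)]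
        simp [Nat.cast_sub hk]
        ring
      · have : m k = 0 := by simpa using h
        simp [this]
    · intro p hp
      rw [Finset.mem_filter] at hp
      rw [← hp.2]
      exact hN1 p hp.1
  have hB : ∀ k, MvPolynomial.coeff m (X k * MvPolynomial.pderiv k (ξ j)) =
      if k = j then l j * MvPolynomial.coeff m (X j) else 0 := by
    intro k
    rw [hξ j, map_add, map_sum, mul_add, MvPolynomial.coeff_add, Finset.mul_sum,
      MvPolynomial.coeff_sum, Finset.sum_eq_zero, add_zero, MvPolynomial.pderiv_C_mul,
      MvPolynomial.pderiv_X]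
    · by_cases hk : k = j
      · subst hk
        rw [if_pos rfl, Pi.single_eq_same, mul_one, mul_comm, MvPolynomial.coeff_C_mul]
      · simp [hk, Pi.single_apply, Ne.symm hk]
    · intro p hp
      rw [Finset.mem_filter] at hp
      exact hN2 p hp.1 hp.2 k
  have h := congrArg (MvPolynomial.coeff m) (hbr j)
  simp only [MvPolynomial.coeff_sum, MvPolynomial.coeff_sub, hA, hB, Finset.sum_sub_distrib,
    ← Finset.sum_mul, Finset.sum_ite_eq', Finset.sum_ite_eq, Finset.mem_univ, if_true,
    MvPolynomial.coeff_zero, ← sub_mul] at h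
  rcases mul_eq_zero.mp h with h | h
  · exact hX j m hjm' (sub_eq_zero.mp h).symm
  · exact MvPolynomial.mem_support_iff.mp hjm' h
end
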